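/- Let X and Y be measurable spaces, Q a Markov kernel from X to Y, γ : Y → X a measurable map, and R the deterministic kernel from Y to X given by R(·|y) = δ_{γ(y)}. Set K = Q⨟R and K' = R⨟Q, and let π be a probability measure on X invariant for K, i.e. πK = π. Then for every y ∈ Y and every integer n ≥ 1, sup over measurable A ⊆ Y of |(K')^n(A|y) − (πQ)(A)| is at most sup over measurable B ⊆ X of |K^{n−1}(B|γ(y)) − π(B)|. In particular, if there exist C < ∞ and ρ < 1 with sup_B |K^m(B|γ(y)) − π(B)| ≤ C ρ^m for all m ∈ ℕ, then sup_A |(K')^n(A|y) − (πQ)(A)| ≤ (max{C,1}/ρ) ρ^n for all n ≥ 1. -/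

import Mathlib

/-!
Reassociating `(Q ∘ₖ R) ∘ₖ ⋯ ∘ₖ (Q ∘ₖ R)` gives `(K')ⁿ⁺¹ = Q ∘ₖ Kⁿ ∘ₖ R`, so the law of `(K')ⁿ⁺¹`
started at `y` is the image under `Q` of the law of `Kⁿ` started from `R y`. Applying `Q` to two
measures does not increase their total variation distance: `(φQ)(A) = ∫ Q(A|x) φ(dx)` is the
integral of a `[0, 1]`-valued function, which by the layer cake formula is an average over
`t ∈ (0, 1]` of the `φ`-masses of its superlevel sets.
-/

open ProbabilityTheory MeasureTheory

/-- Iterates of a Markov kernel: `kernelIter K 0` is the identity (Dirac) kernel and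
`kernelIter K (n+1) = K ∘ₖ kernelIter K n`. -/
noncomputable def kernelIter {X : Type*} [MeasurableSpace X] (K : Kernel X X) : ℕ → Kernel X X
  | 0 => Kernel.id
  | n + 1 => K ∘ₖ kernelIter K n

/-- Total variation distance between two measures, as the supremum over measurable sets of
the absolute difference of their (real-valued) masses. -/
noncomputable def tvDist {Z : Type*} [MeasurableSpace Z] (φ ψ : Measure Z) : ℝ :=
  sSup {r : ℝ | ∃ A : Set Z, MeasurableSet A ∧ r = |(φ A).toReal - (ψ A).toReal|}

section Iterates

variable {X Y : Type*} [MeasurableSpace X] [MeasurableSpace Y]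

instance (K : Kernel X X) [IsFiniteKernel K] (n : ℕ) : IsFiniteKernel (kernelIter K n) := by
  induction n with
  | zero => rw [kernelIter]; infer_instance
  | succ n ih => rw [kernelIter]; infer_instance

theorem kernelIter_comp_succ (Q : Kernel X Y) (R : Kernel Y X) (n : ℕ) :
    kernelIter (Q ∘ₖ R) (n + 1) = Q ∘ₖ kernelIter (R ∘ₖ Q) n ∘ₖ R := by
  induction n with
  | zero => simp [kernelIter]
  | succ n ih => rw [kernelIter, ih, kernelIter]; simp only [Kernel.comp_assoc]

theorem kernelIter_comp_succ_apply (Q : Kernel X Y) (R : Kernel Y X) (n : ℕ) (y : Y) :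
    kernelIter (Q ∘ₖ R) (n + 1) y = Q ∘ₘ (kernelIter (R ∘ₖ Q) n ∘ₘ R y) := by
  rw [kernelIter_comp_succ, Kernel.comp_apply, Measure.comp_assoc]

end Iterates

section LayerCake

variable {Z : Type*} [MeasurableSpace Z] (μ : Measure Z) [IsFiniteMeasure μ]

theorem antitone_measureReal_superlevel (f : Z → ℝ) : Antitone fun t ↦ μ.real {z | t ≤ f z} :=
  fun _ _ hst ↦ measureReal_mono fun _ hz ↦ hst.trans hz

theorem integral_eq_intervalIntegral_measureReal_superlevel {f : Z → ℝ} (hf : Measurable f)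
    (hf_mem : ∀ z, f z ∈ Set.Icc 0 1) :
    ∫ z, f z ∂μ = ∫ t in 0..1, μ.real {z | t ≤ f z} := by
  have hf_int : Integrable f μ :=
    .of_mem_Icc 0 1 hf.aemeasurable (.of_forall hf_mem)
  rw [intervalIntegral.integral_of_le zero_le_one]
  exact hf_int.integral_eq_integral_Ioc_meas_le (.of_forall fun z ↦ (hf_mem z).1)
    (.of_forall fun z ↦ (hf_mem z).2)

end LayerCake

section TotalVariation

variable {Z : Type*} [MeasurableSpace Z] (φ ψ : Measure Z) [IsFiniteMeasure φ] [IsFiniteMeasure ψ]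

theorem abs_measureReal_sub_le_tvDist {A : Set Z} (hA : MeasurableSet A) :
    |φ.real A - ψ.real A| ≤ tvDist φ ψ := by
  refine le_csSup ⟨max (φ.real .univ) (ψ.real .univ), ?_⟩ ⟨A, hA, rfl⟩
  rintro _ ⟨B, -, rfl⟩
  exact abs_sub_le_of_nonneg_of_le measureReal_nonneg
    ((measureReal_mono (Set.subset_univ B)).trans (le_max_left _ _)) measureReal_nonneg
    ((measureReal_mono (Set.subset_univ B)).trans (le_max_right _ _))

theorem abs_integral_sub_integral_le_tvDist {f : Z → ℝ} (hf : Measurable f)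
    (hf_mem : ∀ z, f z ∈ Set.Icc 0 1) :
    |∫ z, f z ∂φ - ∫ z, f z ∂ψ| ≤ tvDist φ ψ := by
  have superlevel_le (t : ℝ) : |φ.real {z | t ≤ f z} - ψ.real {z | t ≤ f z}| ≤ tvDist φ ψ :=
    abs_measureReal_sub_le_tvDist φ ψ (measurableSet_le measurable_const hf)
  calc |∫ z, f z ∂φ - ∫ z, f z ∂ψ|
      = |∫ t in 0..1, (φ.real {z | t ≤ f z} - ψ.real {z | t ≤ f z})| := by
        rw [intervalIntegral.integral_sub
            (antitone_measureReal_superlevel φ f).intervalIntegrable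
            (antitone_measureReal_superlevel ψ f).intervalIntegrable,
          ← integral_eq_intervalIntegral_measureReal_superlevel φ hf hf_mem,
          ← integral_eq_intervalIntegral_measureReal_superlevel ψ hf hf_mem]
    _ ≤ tvDist φ ψ * |1 - 0| := by
        rw [← Real.norm_eq_abs]
        exact intervalIntegral.norm_integral_le_of_norm_le_const fun t _ ↦ superlevel_le t
    _ = tvDist φ ψ := by simp

end TotalVariation

section DataProcessing

variable {X Y : Type*} [MeasurableSpace X] [MeasurableSpace Y]

theorem measureReal_bind (φ : Measure X) (Q : Kernel X Y) [IsFiniteKernel Q] {A : Set Y}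
    (hA : MeasurableSet A) : (Q ∘ₘ φ).real A = ∫ x, (Q x).real A ∂φ := by
  rw [measureReal_def, Measure.bind_apply hA Q.aemeasurable]
  exact (integral_toReal (Q.measurable_coe hA).aemeasurable
    (.of_forall fun x ↦ measure_lt_top (Q x) A)).symm

theorem tvDist_bind_le (φ ψ : Measure X) [IsFiniteMeasure φ] [IsFiniteMeasure ψ]
    (Q : Kernel X Y) [IsMarkovKernel Q] : tvDist (Q ∘ₘ φ) (Q ∘ₘ ψ) ≤ tvDist φ ψ := by
  refine csSup_le ⟨_, .univ, .univ, rfl⟩ ?_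
  rintro _ ⟨A, hA, rfl⟩
  rw [← measureReal_def, ← measureReal_def, measureReal_bind φ Q hA, measureReal_bind ψ Q hA]
  exact abs_integral_sub_integral_le_tvDist φ ψ (Q.measurable_coe hA).ennreal_toReal
    fun x ↦ ⟨measureReal_nonneg, measureReal_le_one⟩

theorem tvDist_kernelIter_comp_succ_le (Q : Kernel X Y) [IsMarkovKernel Q] (R : Kernel Y X)
    [IsFiniteKernel R] (π : Measure X) [IsFiniteMeasure π] (y : Y) (n : ℕ) :
    tvDist (kernelIter (Q ∘ₖ R) (n + 1) y) (Q ∘ₘ π) ≤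
      tvDist (kernelIter (R ∘ₖ Q) n ∘ₘ R y) π := by
  rw [kernelIter_comp_succ_apply]
  exact tvDist_bind_le _ π Q

end DataProcessing

theorem augmented_kernel_geometric_ergodicity_general {X Y : Type*}
    [MeasurableSpace X] [MeasurableSpace Y]
    (Q : Kernel X Y) [IsMarkovKernel Q] (R : Kernel Y X) [IsFiniteKernel R]
    (π : Measure X) [IsFiniteMeasure π] :
    (∀ (y : Y) (n : ℕ), 1 ≤ n →
        tvDist (kernelIter (Q ∘ₖ R) n y) (Q ∘ₘ π) ≤
          tvDist (kernelIter (R ∘ₖ Q) (n - 1) ∘ₘ R y) π) ∧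
      (∀ (y : Y) (C ρ : ℝ), 0 < ρ →
        (∀ m : ℕ, tvDist (kernelIter (R ∘ₖ Q) m ∘ₘ R y) π ≤ C * ρ ^ m) →
        ∀ n : ℕ, 1 ≤ n →
          tvDist (kernelIter (Q ∘ₖ R) n y) (Q ∘ₘ π) ≤ C / ρ * ρ ^ n) := by
  refine ⟨fun y n hn ↦ ?_, fun y C ρ hρ hC n hn ↦ ?_⟩
  · obtain ⟨m, rfl⟩ := Nat.exists_eq_add_of_le' hn
    exact tvDist_kernelIter_comp_succ_le Q R π y m
  · obtain ⟨m, rfl⟩ := Nat.exists_eq_add_of_le' hn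
    calc tvDist (kernelIter (Q ∘ₖ R) (m + 1) y) (Q ∘ₘ π)
        ≤ tvDist (kernelIter (R ∘ₖ Q) m ∘ₘ R y) π := tvDist_kernelIter_comp_succ_le Q R π y m
      _ ≤ C * ρ ^ m := hC m
      _ = C / ρ * ρ ^ (m + 1) := by field_simp; ring

/-- **Inheriting geometric ergodicity (quantitative core).**
Let `Q : X → Y` be a Markov kernel, `γ : Y → X` measurable, `R = δ_{γ(·)}` the deterministic
kernel, `K = Q⨟R = R ∘ₖ Q` and `K' = R⨟Q = Q ∘ₖ R`, and let `π` be invariant for `K`.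
Then for every `y` and every `n ≥ 1`,
`‖(K')^n(·|y) − πQ‖_TV ≤ ‖K^{n-1}(·|γ(y)) − π‖_TV`; in particular, if
`‖K^m(·|γ(y)) − π‖_TV ≤ C ρ^m` for all `m` with `0 < ρ < 1`, then
`‖(K')^n(·|y) − πQ‖_TV ≤ (max C 1 / ρ) * ρ^n` for all `n ≥ 1`. -/
theorem augmented_kernel_geometric_ergodicity {X Y : Type*}
    [MeasurableSpace X] [MeasurableSpace Y]
    (Q : Kernel X Y) [IsMarkovKernel Q] (γ : Y → X) (hγ : Measurable γ)
    (π : Measure X) [IsProbabilityMeasure π]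
    (hinv : Kernel.Invariant (Kernel.deterministic γ hγ ∘ₖ Q) π) :
    (∀ (y : Y) (n : ℕ), 1 ≤ n →
        tvDist (kernelIter (Q ∘ₖ Kernel.deterministic γ hγ) n y) (π.bind Q) ≤
          tvDist (kernelIter (Kernel.deterministic γ hγ ∘ₖ Q) (n - 1) (γ y)) π) ∧
      (∀ (y : Y) (C ρ : ℝ), 0 < ρ → ρ < 1 →
        (∀ m : ℕ,
          tvDist (kernelIter (Kernel.deterministic γ hγ ∘ₖ Q) m (γ y)) π ≤ C * ρ ^ m) →
        ∀ n : ℕ, 1 ≤ n →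
          tvDist (kernelIter (Q ∘ₖ Kernel.deterministic γ hγ) n y) (π.bind Q) ≤
            max C 1 / ρ * ρ ^ n) := by
  have h := augmented_kernel_geometric_ergodicity_general Q (Kernel.deterministic γ hγ) π
  simp only [Kernel.deterministic_apply, Measure.dirac_bind (Kernel.measurable _)] at h
  exact ⟨h.1, fun y C ρ hρ _ hC ↦ h.2 y (max C 1) ρ hρ fun m ↦
    (hC m).trans (by gcongr; exact le_max_left C 1)⟩
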